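/- arXiv:2305.00462 — 2 statements merged into one kernel-verified Lean document; each statement's English description precedes it below -/
import Mathlib

section
/- Let n ≥ 1, let γ : Fin n → ℝ satisfy γ i ≥ 0 for all i, let T = Σ_{i} γ i, and let x : Fin n → ℝ be non-increasing (i ≤ j implies x i ≥ x j). Then Σ_{j = 0}^{n−2} (Σ_{i ≤ j} γ i) · (T − Σ_{i ≤ j} γ i) · (x j − x (j+1)) = (1/2) · Σ_{u} Σ_{v} γ u · γ v · |x u − x v|, where the sums over u and v range over Fin n. -/
open Finset

theorem Fin.sum_Iic_last {M : Type*} [AddCommMonoid M] {n : ℕ} (f : Fin (n + 1) → M) :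
    ∑ i ∈ Iic (Fin.last n), f i = ∑ i, f i := by
  congr 1
  ext i
  simp [Fin.le_last]

/-- Abel summation: weighting consecutive differences by prefix sums. -/
theorem Fin.sum_prefix_mul_sub_succ {R : Type*} [CommRing R] (n : ℕ) (γ x : Fin (n + 1) → R) :
    ∑ j : Fin n, (∑ i ∈ Iic j.castSucc, γ i) * (x j.castSucc - x j.succ)
      = ∑ u, γ u * (x u - x (Fin.last n)) := by
  induction n with
  | zero => simp
  | succ n ih =>
    have h := ih (fun i => γ i.castSucc) (fun i => x i.castSucc)
    rw [Fin.sum_univ_castSucc, Fin.sum_univ_castSucc (n := n + 1)]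
    simp only [Fin.sum_Iic_castSucc _ (Fin.castSucc _), Fin.sum_Iic_castSucc _ (Fin.last _),
      Fin.sum_Iic_last, Fin.succ_castSucc, Fin.succ_last, sub_self, mul_zero, add_zero]
    rw [h, sum_mul, ← sum_add_distrib]
    exact sum_congr rfl fun u _ => by ring

/-- The telescoping identity at the core of Proposition 2: for `g y = y * (T - y)`,
the Lovász-extension sum of prefix cut values of a non-increasingly sorted vector
equals a weighted total-variation double sum.  Here the index type `Fin (n + 1)`
realizes an arbitrary `n' ≥ 1` (with `n' = n + 1`). -/
theorem prefix_telescoping_identity (n : ℕ)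
    (γ : Fin (n + 1) → ℝ) (hγ : ∀ i, 0 ≤ γ i)
    (T : ℝ) (hT : T = ∑ i, γ i)
    (x : Fin (n + 1) → ℝ) (hx : ∀ i j : Fin (n + 1), i ≤ j → x j ≤ x i) :
    ∑ j : Fin n,
        (∑ i ∈ Finset.Iic j.castSucc, γ i) * (T - ∑ i ∈ Finset.Iic j.castSucc, γ i)
          * (x j.castSucc - x j.succ)
      = (1 / 2) * ∑ u, ∑ v, γ u * γ v * |x u - x v| := by
  induction n generalizing T with
  | zero => simp
  | succ n ih =>
    have h := ih (fun i => γ i.castSucc) (fun i => hγ _) _ rfl (fun i => x i.castSucc)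
      (fun i j hij => hx _ _ (Fin.castSucc_le_castSucc_iff.2 hij))
    have abel := Fin.sum_prefix_mul_sub_succ (n + 1) γ x
    set a := γ (Fin.last (n + 1))
    set S := ∑ i : Fin (n + 1), γ i.castSucc with hS
    have hTS : T = S + a := by rw [hT, Fin.sum_univ_castSucc]
    have left : ∑ j : Fin (n + 1), (∑ i ∈ Iic j.castSucc, γ i)
          * (T - ∑ i ∈ Iic j.castSucc, γ i) * (x j.castSucc - x j.succ)
        = ∑ j : Fin (n + 1), (∑ i ∈ Iic j.castSucc, γ i)
          * (S - ∑ i ∈ Iic j.castSucc, γ i) * (x j.castSucc - x j.succ)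
          + a * ∑ u, γ u * (x u - x (Fin.last (n + 1))) := by
      rw [← abel, mul_sum, ← sum_add_distrib, hTS]
      exact sum_congr rfl fun j _ => by ring
    have right : ∑ u, ∑ v, γ u * γ v * |x u - x v|
        = ∑ u : Fin (n + 1), ∑ v : Fin (n + 1),
            γ u.castSucc * γ v.castSucc * |x u.castSucc - x v.castSucc|
          + 2 * (a * ∑ u, γ u * (x u - x (Fin.last (n + 1)))) := by
      have hlast (u) : |x u - x (Fin.last (n + 1))| = x u - x (Fin.last (n + 1)) :=
        abs_of_nonneg (sub_nonneg.2 (hx _ _ (Fin.le_last u)))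
      simp only [Fin.sum_univ_castSucc (n := n + 1), abs_sub_comm (x (Fin.last (n + 1))), hlast,
        sum_add_distrib, sub_self, mul_zero, add_zero, mul_sum, two_mul, add_assoc]
      congr 2 <;> exact sum_congr rfl fun u _ => by ring
    rw [left, right, Fin.sum_univ_castSucc]
    simp only [Fin.sum_Iic_castSucc _ (Fin.castSucc _), Fin.sum_Iic_castSucc _ (Fin.last _),
      Fin.sum_Iic_last, Fin.succ_castSucc, ← hS, sub_self, mul_zero, zero_mul, add_zero]
    rw [h]
    ring
end

section
/- Let V be a finite type, let e ⊆ V be a nonempty finite subset with n = |e|, let γ : V → ℝ satisfy γ v > 0 for v ∈ e and γ v = 0 for v ∉ e, let c > 0, and let T = Σ_{v ∈ e} γ v. Define w : Finset V → ℝ by w(S) = c · (Σ_{v ∈ S ∩ e} γ v) · (T − Σ_{v ∈ S ∩ e} γ v). Let x : V → ℝ and let ρ : Fin n → e be a bijective enumeration of e such that x(ρ 0) ≥ x(ρ 1) ≥ ⋯ ≥ x(ρ (n−1)). Then Σ_{j = 0}^{n−2} w({ρ 0, …, ρ j}) · (x(ρ j) − x(ρ (j+1))) = (c/2) · Σ_{u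 ∈ e} Σ_{v ∈ e} γ u · γ v · |x u − x v|. -/
open Finset

/-- Summation by parts for partial sums against successive differences. -/
lemma sum_partialSum_mul_sub (a b : ℕ → ℝ) (m : ℕ) :
    ∑ j ∈ range m, (∑ i ∈ range (j + 1), a i) * (b j - b (j + 1))
      = ∑ i ∈ range m, a i * (b i - b m) := by
  induction m with
  | zero => simp
  | succ m ih =>
    have h : ∑ i ∈ range m, a i * (b i - b (m + 1))
        = ∑ i ∈ range m, a i * (b i - b m) + (∑ i ∈ range m, a i) * (b m - b (m + 1)) := by
      rw [sum_mul, ← sum_add_distrib]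
      exact sum_congr rfl fun i _ => by ring
    rw [sum_range_succ, ih, sum_range_succ a m, sum_range_succ _ m, h]
    ring

/-- Partial sums times complementary sums, paired with successive differences, give the sum over
ordered pairs of indices. -/
lemma sum_partialSum_mul_compl_mul_sub (a b : ℕ → ℝ) (m : ℕ) :
    ∑ j ∈ range m, (∑ i ∈ range (j + 1), a i)
        * (∑ i ∈ range (m + 1), a i - ∑ i ∈ range (j + 1), a i) * (b j - b (j + 1))
      = ∑ j ∈ range (m + 1), ∑ i ∈ range j, a i * a j * (b i - b j) := by
  induction m with
  | zero => simp
  | succ m ih =>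
    have hlast : ∑ i ∈ range (m + 1), a i * a (m + 1) * (b i - b (m + 1))
        = a (m + 1) * ∑ j ∈ range (m + 1), (∑ i ∈ range (j + 1), a i) * (b j - b (j + 1)) := by
      rw [sum_partialSum_mul_sub, mul_sum]
      exact sum_congr rfl fun i _ => by ring
    rw [sum_range_succ (fun j => ∑ i ∈ range j, a i * a j * (b i - b j)) (m + 1), ← ih, hlast,
      sum_range_succ a (m + 1), sum_range_succ _ m,
      sum_range_succ (fun j => (∑ i ∈ range (j + 1), a i) * (b j - b (j + 1))) m,
      mul_add, mul_sum, ← add_assoc, ← sum_add_distrib]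
    congr 1
    · exact sum_congr rfl fun j _ => by ring
    · ring

/-- For a non-increasing sequence, the weighted sum of absolute differences over all pairs is twice
the sum of differences over ordered pairs. -/
lemma sum_sum_mul_abs_sub_of_antitoneOn (a b : ℕ → ℝ) (m : ℕ)
    (hb : AntitoneOn b (Set.Iio m)) :
    ∑ i ∈ range m, ∑ j ∈ range m, a i * a j * |b i - b j|
      = 2 * ∑ j ∈ range m, ∑ i ∈ range j, a i * a j * (b i - b j) := by
  induction m with
  | zero => simp
  | succ m ih =>
    have hrow : ∑ j ∈ range m, a m * a j * |b m - b j|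
        = ∑ i ∈ range m, a i * a m * (b i - b m) := by
      refine sum_congr rfl fun i hi => ?_
      have hi : i < m := mem_range.1 hi
      have hle : b m ≤ b i :=
        hb (Set.mem_Iio.2 (by omega)) (Set.mem_Iio.2 (by omega)) hi.le
      rw [abs_sub_comm, abs_of_nonneg (sub_nonneg.2 hle)]
      ring
    have hcol : ∑ i ∈ range m, a i * a m * |b i - b m|
        = ∑ i ∈ range m, a i * a m * (b i - b m) := by
      rw [← hrow]
      exact sum_congr rfl fun i _ => by rw [abs_sub_comm]; ring
    have ih' := ih (hb.mono (Set.Iio_subset_Iio m.le_succ))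
    simp only [sum_range_succ, sum_add_distrib]
    rw [ih', hrow, hcol]
    simp only [sub_self, abs_zero, mul_zero, add_zero]
    ring

/-- The per-hyperedge identity in the proof of Proposition 2: for the weight
function `w S = c * g (∑ v ∈ S ∩ e, γ v)` with `g y = y * (T - y)`, the Lovász
extension of `w` at `x`, computed via a sorted enumeration `ρ` of `e`, equals
`(c / 2) * ∑ u ∈ e, ∑ v ∈ e, γ u * γ v * |x u - x v|`. -/
theorem lovasz_extension_clique (V : Type*) [Fintype V] [DecidableEq V]
    (e : Finset V) (he : e.Nonempty) (n : ℕ) (hn : n = e.card)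
    (γ : V → ℝ) (hγpos : ∀ v ∈ e, 0 < γ v) (hγ0 : ∀ v ∉ e, γ v = 0)
    (c : ℝ) (hc : 0 < c) (T : ℝ) (hT : T = ∑ v ∈ e, γ v)
    (w : Finset V → ℝ)
    (hw : ∀ S : Finset V, w S = c * (∑ v ∈ S ∩ e, γ v) * (T - ∑ v ∈ S ∩ e, γ v))
    (x : V → ℝ) (ρ : Fin n → {v // v ∈ e}) (hρ : Function.Bijective ρ)
    (hsort : ∀ i j : Fin n, i ≤ j → x (ρ j) ≤ x (ρ i)) :
    ∑ j : Fin (n - 1),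
        w ((Finset.Iic (⟨j.val, lt_of_lt_of_le j.isLt (Nat.sub_le n 1)⟩ : Fin n)).image
              (fun i => (ρ i : V)))
          * (x (ρ ⟨j.val, lt_of_lt_of_le j.isLt (Nat.sub_le n 1)⟩)
              - x (ρ ⟨j.val + 1, by have := j.isLt; omega⟩))
      = (c / 2) * ∑ u ∈ e, ∑ v ∈ e, γ u * γ v * |x u - x v| := by
  obtain ⟨m, rfl⟩ : ∃ m, n = m + 1 :=
    ⟨n - 1, by have := he.card_pos; omega⟩
  set a : ℕ → ℝ := fun k => if h : k < m + 1 then γ (ρ ⟨k, h⟩) else 0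
  set b : ℕ → ℝ := fun k => if h : k < m + 1 then x (ρ ⟨k, h⟩) else 0
  have ha_fin (i : Fin (m + 1)) : a i = γ (ρ i) := dif_pos i.isLt
  have hb_fin (i : Fin (m + 1)) : b i = x (ρ i) := dif_pos i.isLt
  have hinj : Function.Injective fun i => (ρ i : V) :=
    Subtype.val_injective.comp hρ.injective
  have hsum (f : V → ℝ) : ∑ v ∈ e, f v = ∑ i, f (ρ i) := by
    rw [← sum_coe_sort e f]
    exact (hρ.sum_comp fun v : {v // v ∈ e} => f v).symm
  have hT' : T = ∑ i ∈ range (m + 1), a i := by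
    rw [hT, hsum, ← Fin.sum_univ_eq_sum_range]
    simp only [ha_fin]
  have hpair : ∑ u ∈ e, ∑ v ∈ e, γ u * γ v * |x u - x v|
      = ∑ i ∈ range (m + 1), ∑ j ∈ range (m + 1), a i * a j * |b i - b j| := by
    simp only [hsum, ← Fin.sum_univ_eq_sum_range, ha_fin, hb_fin]
  have hanti : AntitoneOn b (Set.Iio (m + 1)) := by
    intro i hi j hj hij
    simpa only [← hb_fin] using hsort ⟨i, hi⟩ ⟨j, hj⟩ hij
  have hprefix (k : Fin (m + 1)) :
      ∑ v ∈ (Iic k).image (fun i => (ρ i : V)) ∩ e, γ v = ∑ i ∈ range (k + 1), a i := by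
    have hsub : (Iic k).image (fun i => (ρ i : V)) ⊆ e :=
      image_subset_iff.2 fun i _ => (ρ i).2
    rw [inter_eq_left.2 hsub, sum_image hinj.injOn]
    have hmap : range (k + 1) = (Iic k).map Fin.valEmbedding := by
      rw [Fin.map_valEmbedding_Iic]
      ext i
      simp
    rw [hmap, sum_map]
    simp only [Fin.valEmbedding_apply, ha_fin]
  rw [hpair, sum_sum_mul_abs_sub_of_antitoneOn a b _ hanti,
    ← sum_partialSum_mul_compl_mul_sub, ← hT', ← mul_assoc, div_mul_cancel₀ c two_ne_zero,
    mul_sum, ← Fin.sum_univ_eq_sum_range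
      (fun j => c * ((∑ i ∈ range (j + 1), a i) * (T - ∑ i ∈ range (j + 1), a i)
        * (b j - b (j + 1))))]
  refine sum_congr rfl fun j _ => ?_
  rw [hw, hprefix, ← hb_fin, ← hb_fin]
  ring
end
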